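/- Fix ν > 0, and let V(λ,ν) = (1/Z(λ,ν))·Σ_{j=0}^∞ j²·λ^j/(j!)^ν − ((1/Z(λ,ν))·Σ_{j=0}^∞ j·λ^j/(j!)^ν)² denote the variance of the CMP(λ,ν) distribution. Then as λ → ∞, V(λ,ν) = (λ^(1/ν)/ν)·(1 + ((ν²−1)/(24ν²))·λ^(−2/ν) + ((ν²−1)/(12ν³))·λ^(−3/ν) + O(λ^(−4/ν))). Precisely: there exist constants C > 0 and Λ > 0 (depending only on ν) such that for all λ ≥ Λ, |ν·λ^(−1/ν)·V(λ,ν) − 1 − ((ν²−1)/(24ν²))·λ^(−2/ν) − ((ν²−1)/(12ν³))·λ^(−3/ν)| ≤ C·λ^(−4/ν). -/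

import Mathlib

open scoped BigOperators

/-- The Conway-Maxwell-Poisson normalizing constant `Z(λ,ν) = ∑_{i=0}^∞ λ^i/(i!)^ν`. -/
noncomputable def cmpZ (lam nu : ℝ) : ℝ := ∑' i : ℕ, lam ^ i / (i.factorial : ℝ) ^ nu

/-- The variance of the `CMP(λ,ν)` distribution:
`V(λ,ν) = (1/Z) ∑_j j² λ^j/(j!)^ν − ((1/Z) ∑_j j λ^j/(j!)^ν)²`. -/
noncomputable def cmpVar (lam nu : ℝ) : ℝ :=
  (∑' j : ℕ, (j : ℝ) ^ 2 * lam ^ j / (j.factorial : ℝ) ^ nu) / cmpZ lam nu -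
    ((∑' j : ℕ, (j : ℝ) * lam ^ j / (j.factorial : ℝ) ^ nu) / cmpZ lam nu) ^ 2


open Filter Topology

/-- generalized binomial coefficients -/
noncomputable def cmpb (ν : ℝ) : ℕ → ℝ
  | 0 => 1
  | k + 1 => cmpb ν k * (ν - k) / (k + 1)

theorem cmpb_eq (ν : ℝ) (k : ℕ) : Ring.choose ν k = cmpb ν k := by
  induction k with
  | zero => simp [cmpb]
  | succ k ih =>
    rw [cmpb, ← ih, Ring.choose_eq_smul, Ring.choose_eq_smul, descPochhammer_succ_right,
      Polynomial.smeval_mul, Nat.factorial_succ]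
    have h : (Polynomial.X - (k : Polynomial ℤ)).smeval ν = ν - k := by
      rw [Polynomial.smeval_sub, Polynomial.smeval_X, Polynomial.smeval_natCast]
      simp
    rw [h]
    have : (k.factorial : ℝ) ≠ 0 := by positivity
    simp only [smul_eq_mul]
    push_cast
    field_simp

theorem cmp_taylor (ν : ℝ) (hν : 0 < ν) (M : ℕ) : ∃ C ≥ (0:ℝ), ∃ N : ℕ, M ≤ N ∧ ∀ t : ℝ, -1 ≤ t →
    |(1 + t) ^ ν - ∑ k ∈ Finset.range M, cmpb ν k * t ^ k| ≤ C * (|t| ^ M + |t| ^ N) := by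
  have h := (Real.one_add_rpow_hasFPowerSeriesAt_zero (a := ν)).isBigO_sub_partialSum_pow M
  obtain ⟨c, hc⟩ := h.bound
  obtain ⟨δ, hδ, hb⟩ := Metric.eventually_nhds_iff.1 hc
  have hb' : ∀ t : ℝ, |t| < δ →
      |(1 + t) ^ ν - ∑ k ∈ Finset.range M, cmpb ν k * t ^ k| ≤ c * |t| ^ M := by
    intro t ht
    have := hb (y := t) (by simpa using ht)
    have hco : ∀ k, (binomialSeries ℝ ν).coeff k = cmpb ν k := by
      intro k
      rw [binomialSeries, FormalMultilinearSeries.coeff_ofScalars, cmpb_eq]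
    simpa [FormalMultilinearSeries.partialSum, hco, mul_comm] using this
  obtain ⟨N, hN⟩ := exists_nat_ge (max ν M)
  have hN1 : ν ≤ N := le_trans (le_max_left _ _) hN
  have hN2 : M ≤ N := by exact_mod_cast le_trans (le_max_right _ _) hN
  -- far bound
  have hpow : ∀ t : ℝ, δ ≤ |t| → ∀ k ≤ N, |t| ^ k ≤ (1 + 1/δ) ^ N * |t| ^ N := by
    intro t ht k hk
    have ht0 : 0 < |t| := lt_of_lt_of_le hδ ht
    have h1 : 1 ≤ (1 + 1/δ) * |t| := by
      have : 1 ≤ (1/δ) * |t| := by rw [one_div, inv_mul_eq_div, one_le_div hδ]; exact ht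
      nlinarith
    have h2 : |t| ≤ (1 + 1/δ) * |t| := by
      have : 0 ≤ (1/δ) * |t| := by positivity
      nlinarith
    calc |t| ^ k ≤ ((1 + 1/δ) * |t|) ^ k := by gcongr
      _ ≤ ((1 + 1/δ) * |t|) ^ N := pow_le_pow_right₀ h1 hk
      _ = _ := by rw [mul_pow]
  set K := (1 + 1/δ) ^ N with hK
  have hKpos : 0 < K := by positivity
  set D := K * (2:ℝ)^N + K * 2 ^ N + ∑ k ∈ Finset.range M, |cmpb ν k| * K with hD
  have hS : 0 ≤ ∑ k ∈ Finset.range M, |cmpb ν k| * K := Finset.sum_nonneg fun i _ => by positivity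
  have hDpos : 0 ≤ D := by positivity
  refine ⟨|c| + D, by positivity, N, hN2, fun t ht => ?_⟩
  have e1 : 0 ≤ |t| ^ M := by positivity
  have e2 : 0 ≤ |t| ^ N := by positivity
  by_cases hlt : |t| < δ
  · refine (hb' t hlt).trans ?_
    have := le_abs_self c
    have : c * |t| ^ M ≤ |c| * |t| ^ M := by gcongr
    have : 0 ≤ |c| * |t| ^ N + D * (|t| ^ M + |t| ^ N) := by positivity
    nlinarith
  · push Not at hlt
    have h1 : |(1 + t) ^ ν| ≤ (K * 2 ^ N + K * 2 ^ N) * |t| ^ N := by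
      rw [abs_of_nonneg (Real.rpow_nonneg (by linarith) _)]
      have hy : 1 + t ≤ 1 + |t| := by linarith [le_abs_self t]
      calc (1 + t) ^ ν ≤ (1 + |t|) ^ ν := Real.rpow_le_rpow (by linarith) hy hν.le
        _ ≤ (1 + |t|) ^ (N:ℝ) := Real.rpow_le_rpow_of_exponent_le (by linarith [abs_nonneg t]) hN1
        _ = (1 + |t|) ^ N := Real.rpow_natCast _ _
        _ ≤ 2 ^ N * (1 + |t| ^ N) := by
            rcases le_total (|t|) 1 with h | h
            · calc (1 + |t|)^N ≤ 2 ^ N := by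
                    apply pow_le_pow_left₀ (by positivity); linarith
                _ ≤ _ := by
                    have : (0:ℝ) < 2 ^ N := by positivity
                    nlinarith
            · calc (1 + |t|)^N ≤ (2 * |t|) ^ N := by
                    apply pow_le_pow_left₀ (by positivity); linarith
                _ = 2 ^ N * |t| ^ N := mul_pow _ _ _
                _ ≤ _ := by
                    have : (0:ℝ) < 2 ^ N := by positivity
                    nlinarith
        _ ≤ 2 ^ N * (K * |t| ^ N + K * |t| ^ N) := by
            gcongr
            · simpa using hpow t hlt 0 (Nat.zero_le _)
            · exact hpow t hlt N le_rfl
        _ = _ := by ring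
    have h2 : |∑ k ∈ Finset.range M, cmpb ν k * t ^ k|
        ≤ (∑ k ∈ Finset.range M, |cmpb ν k| * K) * |t| ^ N := by
      refine (Finset.abs_sum_le_sum_abs _ _).trans ?_
      rw [Finset.sum_mul]
      refine Finset.sum_le_sum fun k hk => ?_
      rw [abs_mul, abs_pow, mul_assoc]
      have := hpow t hlt k (by have := Finset.mem_range.1 hk; omega)
      gcongr
    have h3 := abs_sub ((1 + t) ^ ν) (∑ k ∈ Finset.range M, cmpb ν k * t ^ k)
    have h4 : |(1 + t) ^ ν - ∑ k ∈ Finset.range M, cmpb ν k * t ^ k| ≤ D * |t| ^ N := by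
      rw [hD]; linarith
    have : 0 ≤ |c| * (|t| ^ M + |t| ^ N) + D * |t| ^ M := by positivity
    nlinarith

theorem cmp_ptwise (ν : ℝ) (hν : 0 < ν) (x : ℝ) (hx : 0 ≤ x) :
    min 1 ν * (x - 1) ^ 2 ≤ (x ^ ν - 1) * (1 + x) * (x - 1) := by
  rcases le_total 1 ν with h1 | h1
  · rw [min_eq_left h1]
    have key : (x - 1) ^ 2 ≤ (x ^ ν - 1) * (x - 1) := by
      rcases le_total 1 x with h | h
      · have : x ≤ x ^ ν := by simpa using Real.rpow_le_rpow_of_exponent_le h h1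
        nlinarith
      · have : x ^ ν ≤ x := by
          rcases hx.eq_or_lt with rfl | h0
          · rw [Real.zero_rpow hν.ne']
          · simpa using Real.rpow_le_rpow_of_exponent_ge h0 h h1
        nlinarith
    nlinarith [sq_nonneg (x-1)]
  · rw [min_eq_right h1]
    rcases le_total 1 x with h | h
    · have hx0 : 0 < x := by linarith
      have hB := rpow_one_add_le_one_add_mul_self (s := 1/x - 1) (p := ν)
        (by have : 0 < 1/x := by positivity
            linarith) hν.le h1
      rw [show 1 + (1/x - 1) = x⁻¹ by rw [one_div]; ring, Real.inv_rpow hx] at hB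
      have hxν : 1 ≤ x ^ ν := Real.one_le_rpow h hν.le
      have hm : x ^ ν * (x ^ ν)⁻¹ = 1 := mul_inv_cancel₀ (by positivity)
      have hB2 : ν * (1 - 1/x) ≤ 1 - (x^ν)⁻¹ := by linarith
      have h0 : 0 ≤ 1 - 1/x := by
        rw [sub_nonneg, div_le_one hx0]; exact h
      have hB3 : ν * (1 - 1/x) ≤ x ^ ν - 1 := by
        have : x ^ ν * (ν * (1 - 1/x)) ≤ x ^ ν * (1 - (x^ν)⁻¹) := by gcongr
        have h5 : 0 ≤ ν * (1 - 1/x) := by positivity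
        nlinarith
      have hB4 : ν * (x - 1) ≤ (x ^ ν - 1) * (1 + x) := by
        have : ν * (1 - 1/x) * (1 + x) ≤ (x^ν - 1) * (1 + x) := by gcongr
        have h6 : (1 - 1/x) * (1 + x) = (x - 1) + (1 - 1/x) := by field_simp; ring
        have : ν * (1 - 1/x) * (1 + x) = ν * (x - 1) + ν * (1 - 1/x) := by
          rw [mul_assoc, h6]; ring
        have h5 : 0 ≤ ν * (1 - 1/x) := by positivity
        linarith
      nlinarith
    · have hB := rpow_one_add_le_one_add_mul_self (s := x - 1) (p := ν) (by linarith) hν.le h1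
      rw [show 1 + (x - 1) = x by ring] at hB
      have h2 : 0 ≤ (1 - x ^ ν - ν * (1 - x)) := by linarith
      have h3 : ν * (x-1)^2 ≤ (x^ν - 1) * (x - 1) := by nlinarith
      have h4 : 0 ≤ (x^ν - 1) * (x - 1) := le_trans (by positivity) h3
      nlinarith

theorem cmp_absorb (r : ℕ) (δ : ℝ) (hδ : 0 < δ) : ∃ C : ℝ, 0 ≤ C ∧ ∀ u : ℝ,
    (|u| + 1) ^ (2 * r + 1) ≤ C + δ * u ^ (2 * r + 2) := by
  set B := 1 + 2 ^ (2*r+1) / δ with hB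
  have hBp : 0 < B := by positivity
  refine ⟨(B + 1) ^ (2 * r + 1), by positivity, fun u => ?_⟩
  have hev : u ^ (2*r+2) = |u| ^ (2*r+2) := by
    rw [show 2*r+2 = 2*(r+1) by ring, pow_mul, pow_mul, sq_abs]
  rw [hev]
  rcases le_total (|u|) B with h | h
  · have : (|u| + 1) ^ (2*r+1) ≤ (B + 1) ^ (2*r+1) := by gcongr
    have : 0 ≤ δ * |u| ^ (2*r+2) := by positivity
    linarith
  · have h1 : 1 ≤ |u| := by
      have : 0 < (2:ℝ) ^ (2*r+1) / δ := by positivity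
      linarith
    have h2 : (2:ℝ) ^ (2*r+1) ≤ δ * |u| := by
      have : (2:ℝ) ^ (2*r+1) / δ ≤ |u| := by linarith
      rw [div_le_iff₀ hδ] at this
      linarith
    calc (|u| + 1) ^ (2*r+1) ≤ (2 * |u|) ^ (2*r+1) := by
          apply pow_le_pow_left₀ (by positivity); linarith
      _ = 2 ^ (2*r+1) * |u| ^ (2*r+1) := mul_pow _ _ _
      _ ≤ δ * |u| * |u| ^ (2*r+1) := by gcongr
      _ = δ * |u| ^ (2*r+2) := by ring
      _ ≤ _ := by
        have : 0 ≤ (B + 1) ^ (2*r+1) := by positivity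
        linarith

theorem cmp_diff (r : ℕ) (h u : ℝ) (h0 : 0 < h) (h1 : h ≤ 1) :
    (2 + h * (u + h)) * (u + h) ^ (2*r+1) - (2 + h * u) * u ^ (2*r+1)
      ≤ h * ((6 * r + 4) * (|u| + 1) ^ (2*r+1)) := by
  have key : ∀ n : ℕ, (u + h) ^ (n+1) - u ^ (n+1) ≤ h * (n+1) * (|u| + 1) ^ n := by
    intro n
    have := abs_pow_sub_pow_le (a := u + h) (b := u) (n := n + 1)
    have h2 : max |u + h| |u| ≤ |u| + 1 := by
      refine max_le ((abs_add_le _ _).trans ?_) (by linarith)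
      rw [abs_of_pos h0]; linarith
    have h3 : max |u + h| |u| ^ n ≤ (|u| + 1) ^ n := by
      apply pow_le_pow_left₀ (le_trans (abs_nonneg _) (le_max_right _ _)) h2
    rw [show u + h - u = h by ring, abs_of_pos h0, Nat.add_sub_cancel] at this
    push_cast at this
    have h4 : h * ((n:ℝ)+1) * max |u + h| |u| ^ n ≤ h * (n+1) * (|u| + 1) ^ n := by gcongr
    exact (le_abs_self _).trans (this.trans h4)
  have k1 := key (2*r)
  have k2 := key (2*r+1)
  have e : (|u| + 1) ^ (2*r) ≤ (|u| + 1) ^ (2*r+1) :=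
    pow_le_pow_right₀ (by linarith [abs_nonneg u]) (by omega)
  set P := (|u| + 1) ^ (2*r+1)
  have hP : 0 ≤ P := by positivity
  push_cast at k1 k2
  have k1' : (u + h) ^ (2*r+1) - u ^ (2*r+1) ≤ h * (2*r+1) * P := by
    refine k1.trans ?_; gcongr
  have k3 : h * ((u + h) ^ (2*r+1+1) - u ^ (2*r+1+1)) ≤ 1 * (h * (2*r+1+1) * P) := by
    calc _ ≤ h * (h * (2*r+1+1) * P) := by gcongr
      _ ≤ _ := by gcongr
  have : (2 + h * (u + h)) * (u + h) ^ (2*r+1) - (2 + h * u) * u ^ (2*r+1)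
    = 2 * ((u + h) ^ (2*r+1) - u ^ (2*r+1)) + h * ((u + h) ^ (2*r+1+1) - u ^ (2*r+1+1)) := by ring
  rw [this]
  nlinarith

/-- Abstract description of a rescaled CMP law: `h = μ ^ (-1/2)`. -/
structure CmpLaw (ν h : ℝ) (p : ℕ → ℝ) : Prop where
  hpos : 0 < h
  hle : h ≤ 1
  nonneg : ∀ j, 0 ≤ p j
  hasSum : HasSum p 1
  summ : ∀ k : ℕ, Summable fun j : ℕ => p j * ((j : ℝ) + 1) ^ k
  step : ∀ j : ℕ, p (j + 1) * (h ^ 2 * ((j : ℝ) + 1)) ^ ν = p j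

/-- normalized variable -/
noncomputable def cmpu (h : ℝ) (j : ℕ) : ℝ := h * j - h⁻¹

/-- normalized moments -/
noncomputable def cmpn (h : ℝ) (p : ℕ → ℝ) (r : ℕ) : ℝ := ∑' j, p j * cmpu h j ^ r

theorem cmpu_succ (h : ℝ) (j : ℕ) : cmpu h (j + 1) = cmpu h j + h := by
  unfold cmpu; push_cast; ring

theorem cmpu_x {h : ℝ} (h0 : 0 < h) (j : ℕ) : 1 + h * cmpu h j = h ^ 2 * j := by
  unfold cmpu; field_simp; ring

namespace CmpLaw

variable {ν h : ℝ} {p : ℕ → ℝ}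

theorem summ_abs (L : CmpLaw ν h p) (k : ℕ) : Summable fun j => p j * |cmpu h j| ^ k := by
  have h0 := L.hpos
  refine Summable.of_nonneg_of_le (fun j => mul_nonneg (L.nonneg j) (by positivity)) (fun j => ?_)
    ((L.summ k).mul_left ((h + h⁻¹) ^ k))
  have : |cmpu h j| ≤ (h + h⁻¹) * ((j:ℝ) + 1) := by
    unfold cmpu
    have hi : 0 < h⁻¹ := by positivity
    have hj : (0:ℝ) ≤ j := by positivity
    rw [abs_le]
    constructor <;> nlinarith [mul_nonneg h0.le hj, mul_nonneg hi.le hj]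
  calc p j * |cmpu h j| ^ k ≤ p j * ((h + h⁻¹) * ((j:ℝ) + 1)) ^ k := by
        have := L.nonneg j
        gcongr
    _ = _ := by rw [mul_pow]; ring

theorem summ_pow (L : CmpLaw ν h p) (k : ℕ) : Summable fun j => p j * cmpu h j ^ k := by
  refine Summable.of_norm_bounded (L.summ_abs k) (fun j => ?_)
  rw [Real.norm_eq_abs, abs_mul, abs_pow, abs_of_nonneg (L.nonneg j)]

theorem hasSum_n (L : CmpLaw ν h p) (r : ℕ) :
    HasSum (fun j => p j * cmpu h j ^ r) (cmpn h p r) := (L.summ_pow r).hasSum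

theorem n_zero (L : CmpLaw ν h p) : cmpn h p 0 = 1 := by
  simpa [cmpn] using L.hasSum.tsum_eq

/-- Stein identity. -/
theorem stein (L : CmpLaw ν h p) (hν : 0 < ν) (F : ℝ → ℝ) (s : ℝ)
    (hF : HasSum (fun j => p j * F (cmpu h j + h)) s) :
    HasSum (fun j => p j * ((1 + h * cmpu h j) ^ ν * F (cmpu h j))) s := by
  rw [← hasSum_nat_add_iff' 1]
  have e0 : ∑ i ∈ Finset.range 1, p i * ((1 + h * cmpu h i) ^ ν * F (cmpu h i)) = 0 := by
    simp only [Finset.sum_range_one]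
    rw [cmpu_x L.hpos]
    simp [Real.zero_rpow hν.ne']
  rw [e0, sub_zero]
  have e : (fun j => p (j + 1) * ((1 + h * cmpu h (j + 1)) ^ ν * F (cmpu h (j + 1)))) =
      fun j => p j * F (cmpu h j + h) := by
    funext j
    rw [← L.step j, cmpu_x L.hpos, cmpu_succ]
    push_cast
    ring
  rw [e]
  exact hF

theorem even_bound (hν : 0 < ν) (r : ℕ) : ∃ C : ℝ, 0 ≤ C ∧ ∀ h p, CmpLaw ν h p →
    cmpn h p (2 * r + 2) ≤ C := by
  set c := min 1 ν with hc
  have hcp : 0 < c := lt_min one_pos hν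
  set D : ℝ := 6 * r + 4 with hD
  have hDp : 0 < D := by positivity
  obtain ⟨A, hA, hab⟩ := cmp_absorb r (c / (2 * D)) (by positivity)
  refine ⟨2 * (D * A) / c, by positivity, fun h p L => ?_⟩
  have h0 := L.hpos
  let F : ℝ → ℝ := fun u => (2 + h * u) * u ^ (2*r+1)
  have hF : Summable fun j => p j * F (cmpu h j) := by
    refine (((L.summ_pow (2*r+1)).mul_left 2).add ((L.summ_pow (2*r+2)).mul_left h)).congr
      fun j => ?_
    simp only [F]; ring
  -- summability of shifted
  have hFs : Summable fun j => p j * F (cmpu h j + h) := by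
    have hG : ∀ n, Summable fun j => p j * (cmpu h j + h) ^ n := by
      intro n
      have : ∀ j, p j * (cmpu h j + h) ^ n =
          ∑ m ∈ Finset.range (n+1), (h ^ (n - m) * (n.choose m)) * (p j * cmpu h j ^ m) := by
        intro j
        rw [add_pow, Finset.mul_sum]
        exact Finset.sum_congr rfl fun _ _ => by ring
      simp_rw [this]
      exact summable_sum fun m _ => (L.summ_pow m).mul_left _
    refine (((hG (2*r+1)).mul_left 2).add ((hG (2*r+2)).mul_left h)).congr fun j => ?_
    simp only [F]; ring
  have hS := L.stein hν F _ hFs.hasSum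
  have hdiff := (hS.sub hF.hasSum).sub (hFs.hasSum.sub hF.hasSum)
  rw [sub_self] at hdiff
  have hn := L.hasSum_n (2*r+2)
  have hbound := ((hn.mul_left (h * c / 2)).sub (L.hasSum.mul_left (h * (D * A))))
  have := hasSum_le (fun j => ?_) hbound hdiff
  · rw [le_div_iff₀ hcp]
    have e : h * (c / 2 * cmpn h p (2*r+2) - D * A) ≤ 0 := by linarith
    have := nonpos_of_mul_nonpos_right e h0
    linarith
  · set u := cmpu h j with hu
    have hx : 0 ≤ 1 + h * u := by rw [hu, cmpu_x h0]; positivity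
    have P := cmp_ptwise ν hν (1 + h * u) hx
    have Q := cmp_diff r h u h0 L.hle
    have R := hab u
    have hpj := L.nonneg j
    have P' : c * h * u ^ (2*r+2) ≤ ((1 + h*u)^ν - 1) * (2 + h*u) * u ^ (2*r+1) := by
      have h1 : h * (c * h * u ^ 2) ≤ h * (((1 + h*u)^ν - 1) * (2 + h*u) * u) := by
        calc _ = c * (1 + h*u - 1) ^ 2 := by ring
          _ ≤ _ := P
          _ = _ := by ring
      have h2 := le_of_mul_le_mul_left h1 h0
      have h3 : 0 ≤ u ^ (2*r) := by rw [pow_mul]; positivity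
      calc _ = (c * h * u ^ 2) * u ^ (2*r) := by ring
        _ ≤ (((1 + h*u)^ν - 1) * (2 + h*u) * u) * u ^ (2*r) := by gcongr
        _ = _ := by ring
    have R' : h * (D * (|u| + 1) ^ (2*r+1)) ≤ h * (D * A) + h * c / 2 * u ^ (2*r+2) := by
      calc _ ≤ h * (D * (A + c / (2 * D) * u ^ (2*r+2))) := by gcongr
        _ = _ := by field_simp
    have fin : 0 ≤ p j * ((((1 + h*u)^ν - 1) * (2 + h*u) * u ^ (2*r+1) - c * h * u ^ (2*r+2)) +
      ((h * (D * A) + h * c / 2 * u ^ (2*r+2)) -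
        ((2 + h * (u + h)) * (u + h) ^ (2*r+1) - (2 + h * u) * u ^ (2*r+1)))) := by
      apply mul_nonneg hpj
      have := Q.trans R'
      linarith
    simp only [F]
    linarith

theorem abs_bound (hν : 0 < ν) (r : ℕ) : ∃ C : ℝ, 0 ≤ C ∧ ∀ h p, CmpLaw ν h p →
    ∑' j, p j * |cmpu h j| ^ r ≤ C := by
  obtain ⟨C, hC, hb⟩ := even_bound hν r
  refine ⟨1 + C, by positivity, fun h p L => ?_⟩
  have h1 := L.hasSum.add (L.hasSum_n (2*r+2))
  refine (hasSum_le (fun j => ?_) (L.summ_abs r).hasSum h1).trans (by linarith [hb h p L])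
  have hpj := L.nonneg j
  have : |cmpu h j| ^ r ≤ 1 + cmpu h j ^ (2*r+2) := by
    have hev : cmpu h j ^ (2*r+2) = |cmpu h j| ^ (2*r+2) := by
      rw [show 2*r+2 = 2*(r+1) by ring, pow_mul, pow_mul, sq_abs]
    rw [hev]
    rcases le_total (|cmpu h j|) 1 with h2 | h2
    · have := pow_le_one₀ (n := r) (abs_nonneg _) h2
      have : 0 ≤ |cmpu h j| ^ (2*r+2) := by positivity
      linarith
    · have := pow_le_pow_right₀ h2 (show r ≤ 2*r+2 by omega)
      linarith
  calc p j * |cmpu h j| ^ r ≤ p j * (1 + cmpu h j ^ (2*r+2)) := by gcongr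
    _ = _ := by ring

theorem n_bound (hν : 0 < ν) (r : ℕ) : ∃ C : ℝ, 0 ≤ C ∧ ∀ h p, CmpLaw ν h p →
    |cmpn h p r| ≤ C := by
  obtain ⟨C, hC, hb⟩ := abs_bound hν r
  refine ⟨C, hC, fun h p L => le_trans ?_ (hb h p L)⟩
  have := norm_tsum_le_tsum_norm (L.summ_pow r).norm
  simpa [cmpn, abs_mul, abs_of_nonneg (L.nonneg _)] using this

end CmpLaw

/-- truncated moment relation -/
noncomputable def cmpS (ν h : ℝ) (n : ℕ → ℝ) (r N : ℕ) : ℝ :=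
  ∑ k ∈ Finset.range N,
    h ^ k * (cmpb ν (k+1) * n (r + 1 + k) - (r.choose (k+1) : ℝ) * n (r - 1 - k))

theorem CmpLaw.rel {ν : ℝ} (hν : 0 < ν) (r N : ℕ) : ∃ C : ℝ, 0 ≤ C ∧ ∀ h p, CmpLaw ν h p →
    |cmpS ν h (cmpn h p) r N| ≤ C * h ^ N := by
  obtain ⟨T, hT, N', hN', ht⟩ := cmp_taylor ν hν (N+1)
  obtain ⟨C1, hC1, hb1⟩ := CmpLaw.abs_bound hν (N+1+r)
  obtain ⟨C2, hC2, hb2⟩ := CmpLaw.abs_bound hν (N'+r)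
  choose B hB hbB using fun k => CmpLaw.n_bound hν k
  set E := ∑ i ∈ Finset.range (r+1), (r.choose i : ℝ) * B (r - i) with hE
  have hE0 : 0 ≤ E := Finset.sum_nonneg fun i _ => mul_nonneg (by positivity) (hB _)
  refine ⟨T * (C1 + C2) + E, by positivity, fun h p L => ?_⟩
  have h0 := L.hpos
  -- expectation of the shifted power
  have hsh : HasSum (fun j => p j * (cmpu h j + h) ^ r)
      (∑ i ∈ Finset.range (r+1), (r.choose i : ℝ) * h ^ i * cmpn h p (r - i)) := by
    have : (fun j => p j * (cmpu h j + h) ^ r) = fun j => ∑ i ∈ Finset.range (r+1),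
        ((r.choose i : ℝ) * h ^ i) * (p j * cmpu h j ^ (r - i)) := by
      funext j
      rw [add_comm, add_pow, Finset.mul_sum]
      exact Finset.sum_congr rfl fun _ _ => by ring
    rw [this]
    exact hasSum_sum fun i _ => (L.hasSum_n (r - i)).mul_left _
  have hS := L.stein hν (fun u => u ^ r) _ hsh
  have hP : HasSum (fun j => ∑ k ∈ Finset.range (N+1),
      (cmpb ν k * h ^ k) * (p j * cmpu h j ^ (k + r)))
      (∑ k ∈ Finset.range (N+1), cmpb ν k * h ^ k * cmpn h p (k + r)) :=
    hasSum_sum fun k _ => (L.hasSum_n (k + r)).mul_left _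
  have hd := hS.sub hP
  have hmaj := (((L.summ_abs (N+1+r)).hasSum.mul_left (h ^ (N+1))).add
    ((L.summ_abs (N'+r)).hasSum.mul_left (h ^ N'))).mul_left T
  have hmain : |(∑ i ∈ Finset.range (r+1), (r.choose i : ℝ) * h ^ i * cmpn h p (r - i)) -
      ∑ k ∈ Finset.range (N+1), cmpb ν k * h ^ k * cmpn h p (k + r)|
      ≤ T * (C1 + C2) * h ^ (N+1) := by
    have hle : ∀ j, ‖p j * ((1 + h * cmpu h j) ^ ν * cmpu h j ^ r) -
        ∑ k ∈ Finset.range (N+1), (cmpb ν k * h ^ k) * (p j * cmpu h j ^ (k + r))‖ ≤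
        T * (h ^ (N+1) * (p j * |cmpu h j| ^ (N+1+r)) + h ^ N' * (p j * |cmpu h j| ^ (N'+r))) := by
      intro j
      have hx : -1 ≤ h * cmpu h j := by
        have := cmpu_x h0 j
        have : 0 ≤ h ^ 2 * (j:ℝ) := by positivity
        linarith
      have hh := ht (h * cmpu h j) hx
      have e : p j * ((1 + h * cmpu h j) ^ ν * cmpu h j ^ r) -
        ∑ k ∈ Finset.range (N+1), (cmpb ν k * h ^ k) * (p j * cmpu h j ^ (k + r)) =
        p j * cmpu h j ^ r * ((1 + h * cmpu h j) ^ ν -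
          ∑ k ∈ Finset.range (N+1), cmpb ν k * (h * cmpu h j) ^ k) := by
        rw [mul_sub, Finset.mul_sum]
        congr 1
        · ring
        · exact Finset.sum_congr rfl fun _ _ => by ring
      rw [e, Real.norm_eq_abs, abs_mul, abs_mul, abs_of_nonneg (L.nonneg j), abs_pow]
      have hpj := L.nonneg j
      calc _ ≤ p j * |cmpu h j| ^ r * (T * (|h * cmpu h j| ^ (N+1) + |h * cmpu h j| ^ N')) := by
            gcongr
        _ = _ := by rw [abs_mul, abs_of_pos h0]; ring
    have h1 := (hd.tsum_eq ▸ tsum_of_norm_bounded hmaj hle)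
    rw [Real.norm_eq_abs] at h1
    refine h1.trans ?_
    have hp1 : h ^ N' ≤ h ^ (N+1) := pow_le_pow_of_le_one h0.le L.hle hN'
    have s1 := hb1 h p L
    have s2 := hb2 h p L
    calc _ ≤ T * (h ^ (N+1) * C1 + h ^ (N+1) * C2) := by
          have : 0 ≤ ∑' j, p j * |cmpu h j| ^ (N'+r) :=
            tsum_nonneg fun j => mul_nonneg (L.nonneg j) (by positivity)
          gcongr
      _ = _ := by ring
  -- truncated/extended binomial sum
  have htr : |(∑ i ∈ Finset.range (r+1), (r.choose i : ℝ) * h ^ i * cmpn h p (r - i)) -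
      ∑ i ∈ Finset.range (N+1), (r.choose i : ℝ) * h ^ i * cmpn h p (r - i)| ≤ E * h ^ (N+1) := by
    rcases le_total r N with hrN | hrN
    · have : ∑ i ∈ Finset.range (r+1), (r.choose i : ℝ) * h ^ i * cmpn h p (r - i) =
        ∑ i ∈ Finset.range (N+1), (r.choose i : ℝ) * h ^ i * cmpn h p (r - i) := by
        apply Finset.sum_subset (Finset.range_subset_range.2 (by omega))
        intro i _ hi
        rw [Nat.choose_eq_zero_of_lt (by simpa using hi)]
        simp
      rw [this, sub_self, abs_zero]; positivity
    · rw [← Finset.sum_range_add_sum_Ico _ (show N+1 ≤ r+1 by omega), add_sub_cancel_left]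
      refine (Finset.abs_sum_le_sum_abs _ _).trans ?_
      have : ∀ i ∈ Finset.Ico (N+1) (r+1), |(r.choose i : ℝ) * h ^ i * cmpn h p (r - i)| ≤
          (r.choose i : ℝ) * B (r - i) * h ^ (N+1) := by
        intro i hi
        rw [abs_mul, abs_mul, Nat.abs_cast, abs_pow, abs_of_pos h0]
        have a1 : h ^ i ≤ h ^ (N+1) :=
          pow_le_pow_of_le_one h0.le L.hle (Finset.mem_Ico.1 hi).1
        have a2 := hbB (r - i) h p L
        calc _ ≤ (r.choose i : ℝ) * h ^ (N+1) * B (r - i) := by gcongr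
          _ = _ := by ring
      refine (Finset.sum_le_sum this).trans ?_
      rw [← Finset.sum_mul]
      gcongr
      rw [hE]
      apply Finset.sum_le_sum_of_subset_of_nonneg
      · intro i hi; simp only [Finset.mem_Ico] at hi; simp; omega
      · intro i _ _; exact mul_nonneg (by positivity) (hB _)
  have key : h * cmpS ν h (cmpn h p) r N =
      (∑ k ∈ Finset.range (N+1), cmpb ν k * h ^ k * cmpn h p (k + r)) -
      ∑ i ∈ Finset.range (N+1), (r.choose i : ℝ) * h ^ i * cmpn h p (r - i) := by
    rw [Finset.sum_range_succ', Finset.sum_range_succ', cmpS, Finset.mul_sum]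
    simp only [cmpb, Nat.choose_zero_right, Nat.cast_one, pow_zero, one_mul, zero_add,
      Nat.sub_zero, add_sub_add_right_eq_sub]
    rw [← Finset.sum_sub_distrib]
    refine Finset.sum_congr rfl fun k _ => ?_
    rw [show r + 1 + k = k + 1 + r by ring, show r - 1 - k = r - (k + 1) by omega]
    ring
  have hfin : h * |cmpS ν h (cmpn h p) r N| ≤ h * ((T * (C1 + C2) + E) * h ^ N) := by
    rw [← abs_of_pos h0, ← abs_mul, abs_of_pos h0, key]
    rw [abs_le] at hmain htr ⊢
    have : h * ((T * (C1 + C2) + E) * h ^ N) = T * (C1 + C2) * h ^ (N+1) + E * h ^ (N+1) := by ring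
    rw [this]
    constructor <;> linarith [hmain.1, hmain.2, htr.1, htr.2]
  exact le_of_mul_le_mul_left hfin h0

/-- expressions of size `O(h^8)` uniformly over the laws -/
def CmpNeg (ν : ℝ) (f : ℝ → (ℕ → ℝ) → ℝ) : Prop :=
  ∃ C : ℝ, 0 ≤ C ∧ ∀ h p, CmpLaw ν h p → |f h p| ≤ C * h ^ 8

theorem CmpNeg.add {ν : ℝ} {f g : ℝ → (ℕ → ℝ) → ℝ} (hf : CmpNeg ν f) (hg : CmpNeg ν g) :
    CmpNeg ν (fun h p => f h p + g h p) := by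
  obtain ⟨C, hC, hf⟩ := hf
  obtain ⟨D, hD, hg⟩ := hg
  refine ⟨C + D, by positivity, fun h p L => ?_⟩
  have := abs_add_le (f h p) (g h p)
  have := hf h p L
  have := hg h p L
  linarith

theorem CmpNeg.term {ν : ℝ} (hν : 0 < ν) (d : ℝ) (s r N : ℕ) (hs : s + N = 8) :
    CmpNeg ν (fun h p => d * (h ^ s * cmpS ν h (cmpn h p) r N)) := by
  obtain ⟨C, hC, hb⟩ := CmpLaw.rel hν r N
  refine ⟨|d| * C, by positivity, fun h p L => ?_⟩
  have h0 := L.hpos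
  rw [abs_mul, abs_mul, abs_pow, abs_of_pos h0, ← hs, pow_add]
  have := hb h p L
  calc |d| * (h ^ s * |cmpS ν h (cmpn h p) r N|) ≤ |d| * (h ^ s * (C * h ^ N)) := by gcongr
    _ = _ := by ring

/-- the expansion of the normalized moment `n 1` -/
noncomputable def cmpv1 (ν h : ℝ) : ℝ := ((-1)*ν + 1)/(2*ν) * h ^ 1 + ((-1)*ν^2 + 1)/(24*ν^2) * h ^ 3 + ((-1)*ν^2 + 1)/(24*ν^3) * h ^ 5 + (9*ν^4 + (-170)*ν^2 + 161)/(1920*ν^4) * h ^ 7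

set_option maxHeartbeats 2000000 in
/-- certificate error -/
noncomputable def cmpe1 (ν h : ℝ) (n : ℕ → ℝ) : ℝ :=
    (1)/(1*ν) * (h ^ 0 * cmpS ν h n 0 8) +
    ((-1)*ν + 1)/(2*ν) * (h ^ 1 * cmpS ν h n 1 7) +
    (1*ν^2 + (-1))/(12*ν) * (h ^ 2 * cmpS ν h n 2 6) +
    (1*ν^2 + (-1))/(6*ν^2) * (h ^ 2 * cmpS ν h n 0 6) +
    ((-1)*ν^2 + 1)/(24*ν) * (h ^ 3 * cmpS ν h n 3 5) +
    ((-2)*ν^3 + (-1)*ν^2 + 2*ν + 1)/(24*ν^2) * (h ^ 3 * cmpS ν h n 1 5) +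
    ((-1)*ν^4 + 20*ν^2 + (-19))/(720*ν) * (h ^ 4 * cmpS ν h n 4 4) +
    (2*ν^4 + 15*ν^3 + 5*ν^2 + (-15)*ν + (-7))/(240*ν^2) * (h ^ 4 * cmpS ν h n 2 4) +
    (2*ν^4 + 5*ν^2 + (-7))/(120*ν^3) * (h ^ 4 * cmpS ν h n 0 4) +
    (1*ν^4 + (-10)*ν^2 + 9)/(480*ν) * (h ^ 5 * cmpS ν h n 5 3) +
    (2*ν^5 + (-7)*ν^4 + (-40)*ν^3 + (-10)*ν^2 + 38*ν + 17)/(720*ν^2) * (h ^ 5 * cmpS ν h n 3 3) +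
    ((-2)*ν^5 + (-5)*ν^4 + (-5)*ν^3 + (-5)*ν^2 + 7*ν + 10)/(240*ν^3) * (h ^ 5 * cmpS ν h n 1 3) +
    (2*ν^6 + (-147)*ν^4 + 1008*ν^2 + (-863))/(60480*ν) * (h ^ 6 * cmpS ν h n 6 2) +
    ((-2)*ν^6 + (-21)*ν^5 + 42*ν^4 + 210*ν^3 + 42*ν^2 + (-189)*ν + (-82))/(4032*ν^2) * (h ^ 6 * cmpS ν h n 4 2) +
    ((-2)*ν^6 + 49*ν^5 + 98*ν^4 + 70*ν^3 + 42*ν^2 + (-119)*ν + (-138))/(3360*ν^3) * (h ^ 6 * cmpS ν h n 2 2) +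
    (4*ν^6 + 7*ν^4 + 196*ν^2 + (-207))/(2520*ν^4) * (h ^ 6 * cmpS ν h n 0 2) +
    ((-2)*ν^6 + 63*ν^4 + (-336)*ν^2 + 275)/(24192*ν) * (h ^ 7 * cmpS ν h n 7 1) +
    ((-4)*ν^7 + 46*ν^6 + 294*ν^5 + (-441)*ν^4 + (-2016)*ν^3 + (-336)*ν^2 + 1726*ν + 731)/(40320*ν^2) * (h ^ 7 * cmpS ν h n 5 1) +
    (40*ν^7 + 64*ν^6 + (-840)*ν^5 + (-1449)*ν^4 + (-840)*ν^3 + (-294)*ν^2 + 1640*ν + 1679)/(40320*ν^3) * (h ^ 7 * cmpS ν h n 3 1) +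
    ((-32)*ν^7 + (-196)*ν^6 + (-56)*ν^5 + (-91)*ν^4 + (-1568)*ν^3 + (-3094)*ν^2 + 1656*ν + 3381)/(40320*ν^4) * (h ^ 7 * cmpS ν h n 1 1)

set_option maxHeartbeats 4000000 in
theorem cmp_cert1 (ν h : ℝ) (hν : ν ≠ 0) (n : ℕ → ℝ) (h0 : n 0 = 1) :
    n 1 - cmpv1 ν h = cmpe1 ν h n := by
  simp only [cmpe1, cmpv1, cmpS, Finset.sum_range_succ, Finset.sum_range_zero, cmpb, h0,
    Nat.choose, Nat.reduceAdd, Nat.reduceSub, Nat.cast_ofNat, Nat.cast_one,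
    CharP.cast_eq_zero]
  field_simp
  ring

theorem cmp_neg1 (ν : ℝ) (hν : 0 < ν) : CmpNeg ν (fun h p => cmpe1 ν h (cmpn h p)) := by
  unfold cmpe1
  repeat' refine CmpNeg.add ?_ ?_
  all_goals exact CmpNeg.term hν _ _ _ _ (by norm_num)

/-- the expansion of the normalized moment `n 2` -/
noncomputable def cmpv2 (ν h : ℝ) : ℝ := (1)/(1*ν) * h ^ 0 + (1*ν^2 + (-2)*ν + 1)/(4*ν^2) * h ^ 2 + (1*ν^2 + (-1))/(24*ν^2) * h ^ 4 + (1*ν^4 + 24*ν^3 + 22*ν^2 + (-24)*ν + (-23))/(576*ν^4) * h ^ 6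

set_option maxHeartbeats 2000000 in
/-- certificate error -/
noncomputable def cmpe2 (ν h : ℝ) (n : ℕ → ℝ) : ℝ :=
    (1)/(1*ν) * (h ^ 0 * cmpS ν h n 1 8) +
    ((-1)*ν + 1)/(2*ν) * (h ^ 1 * cmpS ν h n 2 7) +
    ((-1)*ν + 1)/(1*ν^2) * (h ^ 1 * cmpS ν h n 0 7) +
    (1*ν^2 + (-1))/(12*ν) * (h ^ 2 * cmpS ν h n 3 6) +
    (3*ν^2 + (-4)*ν + 1)/(4*ν^2) * (h ^ 2 * cmpS ν h n 1 6) +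
    ((-1)*ν^2 + 1)/(24*ν) * (h ^ 3 * cmpS ν h n 4 5) +
    ((-5)*ν^3 + 1*ν^2 + 5*ν + (-1))/(24*ν^2) * (h ^ 3 * cmpS ν h n 2 5) +
    ((-2)*ν^3 + 1*ν^2 + 2*ν + (-1))/(12*ν^3) * (h ^ 3 * cmpS ν h n 0 5) +
    ((-1)*ν^4 + 20*ν^2 + (-19))/(720*ν) * (h ^ 4 * cmpS ν h n 5 4) +
    (1*ν^4 + 9*ν^3 + (-2)*ν^2 + (-9)*ν + 1)/(72*ν^2) * (h ^ 4 * cmpS ν h n 3 4) +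
    (1*ν^2 + (-1))/(8*ν) * (h ^ 4 * cmpS ν h n 1 4) +
    (1*ν^4 + (-10)*ν^2 + 9)/(480*ν) * (h ^ 5 * cmpS ν h n 6 3) +
    (7*ν^5 + (-24)*ν^4 + (-140)*ν^3 + 30*ν^2 + 133*ν + (-6))/(1440*ν^2) * (h ^ 5 * cmpS ν h n 4 3) +
    ((-21)*ν^5 + (-73)*ν^4 + 15*ν^3 + 65*ν^2 + 6*ν + 8)/(720*ν^3) * (h ^ 5 * cmpS ν h n 2 3) +
    ((-6)*ν^5 + 2*ν^4 + (-15)*ν^3 + (-10)*ν^2 + 21*ν + 8)/(360*ν^4) * (h ^ 5 * cmpS ν h n 0 3) +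
    (2*ν^6 + (-147)*ν^4 + 1008*ν^2 + (-863))/(60480*ν) * (h ^ 6 * cmpS ν h n 7 2) +
    ((-2)*ν^6 + (-24)*ν^5 + 51*ν^4 + 240*ν^3 + (-48)*ν^2 + (-216)*ν + (-1))/(2880*ν^2) * (h ^ 6 * cmpS ν h n 5 2) +
    ((-8)*ν^6 + 124*ν^5 + 279*ν^4 + (-80)*ν^3 + (-222)*ν^2 + (-44)*ν + (-49))/(2880*ν^3) * (h ^ 6 * cmpS ν h n 3 2) +
    (44*ν^6 + 52*ν^5 + 25*ν^4 + 100*ν^3 + 46*ν^2 + (-152)*ν + (-115))/(2880*ν^4) * (h ^ 6 * cmpS ν h n 1 2) +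
    ((-2)*ν^6 + 63*ν^4 + (-336)*ν^2 + 275)/(24192*ν) * (h ^ 7 * cmpS ν h n 8 1) +
    ((-18)*ν^7 + 190*ν^6 + 1323*ν^5 + (-2205)*ν^4 + (-9072)*ν^3 + 1680*ν^2 + 7767*ν + 335)/(120960*ν^2) * (h ^ 7 * cmpS ν h n 6 1) +
    (270*ν^7 + 664*ν^6 + (-6615)*ν^5 + (-11739)*ν^4 + 3780*ν^3 + 8526*ν^2 + 2565*ν + 2549)/(120960*ν^3) * (h ^ 7 * cmpS ν h n 4 1) +
    ((-116)*ν^7 + (-1224)*ν^6 + (-875)*ν^5 + (-105)*ν^4 + (-1694)*ν^3 + (-966)*ν^2 + 2685*ν + 2295)/(40320*ν^4) * (h ^ 7 * cmpS ν h n 2 1) +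
    ((-32)*ν^7 + 36*ν^6 + (-56)*ν^5 + (-105)*ν^4 + (-1568)*ν^3 + (-2226)*ν^2 + 1656*ν + 2295)/(20160*ν^5) * (h ^ 7 * cmpS ν h n 0 1)

set_option maxHeartbeats 4000000 in
theorem cmp_cert2 (ν h : ℝ) (hν : ν ≠ 0) (n : ℕ → ℝ) (h0 : n 0 = 1) :
    n 2 - cmpv2 ν h = cmpe2 ν h n := by
  simp only [cmpe2, cmpv2, cmpS, Finset.sum_range_succ, Finset.sum_range_zero, cmpb, h0,
    Nat.choose, Nat.reduceAdd, Nat.reduceSub, Nat.cast_ofNat, Nat.cast_one,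
    CharP.cast_eq_zero]
  field_simp
  ring

theorem cmp_neg2 (ν : ℝ) (hν : 0 < ν) : CmpNeg ν (fun h p => cmpe2 ν h (cmpn h p)) := by
  unfold cmpe2
  repeat' refine CmpNeg.add ?_ ?_
  all_goals exact CmpNeg.term hν _ _ _ _ (by norm_num)

/-- the main estimate in terms of normalized moments -/
theorem cmp_main (ν : ℝ) (hν : 0 < ν) : ∃ C : ℝ, 0 ≤ C ∧ ∀ h p, CmpLaw ν h p →
    |ν * (cmpn h p 2 - cmpn h p 1 ^ 2) - 1 - ((ν ^ 2 - 1) / (24 * ν ^ 2)) * h ^ 4 -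
      ((ν ^ 2 - 1) / (12 * ν ^ 3)) * h ^ 6| ≤ C * h ^ 8 := by
  obtain ⟨C1, hC1, b1⟩ := cmp_neg1 ν hν
  obtain ⟨C2, hC2, b2⟩ := cmp_neg2 ν hν
  obtain ⟨B, hB, bB⟩ := CmpLaw.n_bound hν 1
  -- the leftover polynomial
  set a1 := (-ν + 1) / (2 * ν) with ha1
  set a3 := (-ν ^ 2 + 1) / (24 * ν ^ 2) with ha3
  set a5 := (-ν ^ 2 + 1) / (24 * ν ^ 3) with ha5
  set a7 := (9 * ν ^ 4 - 170 * ν ^ 2 + 161) / (1920 * ν ^ 4) with ha7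
  set P : ℝ → ℝ := fun h => -ν * (2 * a1 * a7 + 2 * a3 * a5 + (2 * a3 * a7 + a5 ^ 2) * h ^ 2 +
    2 * a5 * a7 * h ^ 4 + a7 ^ 2 * h ^ 6) with hP
  have hPc : Continuous P := by fun_prop
  obtain ⟨D, hD⟩ := isCompact_Icc.exists_bound_of_continuousOn (s := Set.Icc (0:ℝ) 1)
    hPc.continuousOn
  have hD0 : 0 ≤ D := (norm_nonneg _).trans (hD 0 (by simp))
  refine ⟨ν * C2 + ν * (C1 * (2 * B + C1)) + D, by positivity, fun h p L => ?_⟩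
  have h0 := L.hpos
  have h1 := L.hle
  have c1 := cmp_cert1 ν h hν.ne' (cmpn h p) L.n_zero
  have c2 := cmp_cert2 ν h hν.ne' (cmpn h p) L.n_zero
  have b1 := b1 h p L
  have b2 := b2 h p L
  have bB := bB h p L
  have bD := hD h ⟨h0.le, h1⟩
  beta_reduce at b1 b2
  rw [← c1] at b1
  rw [← c2] at b2
  set n1 := cmpn h p 1
  set n2 := cmpn h p 2
  have id : ν * (n2 - n1 ^ 2) - 1 - ((ν ^ 2 - 1) / (24 * ν ^ 2)) * h ^ 4 -
      ((ν ^ 2 - 1) / (12 * ν ^ 3)) * h ^ 6 =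
      ν * (n2 - cmpv2 ν h) - ν * ((n1 - cmpv1 ν h) * (2 * n1 - (n1 - cmpv1 ν h))) + P h * h ^ 8 := by
    simp only [hP, ha1, ha3, ha5, ha7, cmpv1, cmpv2]
    field_simp
    ring
  rw [id]
  have hh8 : h ^ 8 ≤ 1 := pow_le_one₀ h0.le h1
  have hh80 : 0 < h ^ 8 := by positivity
  have q1 : |2 * n1 - (n1 - cmpv1 ν h)| ≤ 2 * B + C1 := by
    refine (abs_sub _ _).trans ?_
    rw [abs_mul, abs_two]
    have : C1 * h ^ 8 ≤ C1 := by nlinarith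
    linarith
  have q2 : |ν * ((n1 - cmpv1 ν h) * (2 * n1 - (n1 - cmpv1 ν h)))|
      ≤ ν * (C1 * (2 * B + C1)) * h ^ 8 := by
    rw [abs_mul, abs_mul, abs_of_pos hν]
    calc _ ≤ ν * ((C1 * h ^ 8) * (2 * B + C1)) := by gcongr
      _ = _ := by ring
  have q3 : |ν * (n2 - cmpv2 ν h)| ≤ ν * C2 * h ^ 8 := by
    rw [abs_mul, abs_of_pos hν, mul_assoc]
    gcongr
  have q4 : |P h * h ^ 8| ≤ D * h ^ 8 := by
    rw [abs_mul, abs_of_pos hh80]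
    gcongr
    exact bD
  refine (abs_add_le _ _).trans ?_
  have := abs_sub (ν * (n2 - cmpv2 ν h)) (ν * ((n1 - cmpv1 ν h) * (2 * n1 - (n1 - cmpv1 ν h))))
  linarith

theorem cmp_summable (ν lam : ℝ) (hν : 0 < ν) (hl : 0 < lam) (k : ℕ) :
    Summable fun j : ℕ => lam ^ j / (j.factorial : ℝ) ^ ν * ((j : ℝ) + 1) ^ k := by
  refine summable_of_ratio_test_tendsto_lt_one (l := 0) one_pos
    (Eventually.of_forall fun j => by positivity) ?_
  have e : ∀ j : ℕ, ‖lam ^ (j+1) / ((j+1).factorial : ℝ) ^ ν * (((j+1 : ℕ) : ℝ) + 1) ^ k‖ /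
      ‖lam ^ j / (j.factorial : ℝ) ^ ν * ((j : ℝ) + 1) ^ k‖ =
      lam * (((j:ℝ) + 1) ^ ν)⁻¹ * (1 + 1 / ((j:ℝ) + 1)) ^ k := by
    intro j
    rw [Real.norm_of_nonneg (by positivity), Real.norm_of_nonneg (by positivity),
      Nat.factorial_succ]
    push_cast
    rw [Real.mul_rpow (by positivity) (by positivity),
      show (1 + 1 / ((j:ℝ) + 1)) = ((j:ℝ) + 1 + 1) / (j + 1) by field_simp, div_pow]
    have : (0:ℝ) < (j.factorial : ℝ) ^ ν := by positivity
    have : (0:ℝ) < ((j:ℝ) + 1) ^ ν := by positivity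
    field_simp
    ring
  simp_rw [e]
  have t1 : Tendsto (fun j : ℕ => (j:ℝ) + 1) atTop atTop :=
    tendsto_atTop_add_const_right _ _ tendsto_natCast_atTop_atTop
  have t2 : Tendsto (fun j : ℕ => (((j:ℝ) + 1) ^ ν)⁻¹) atTop (𝓝 0) :=
    ((tendsto_rpow_atTop hν).comp t1).inv_tendsto_atTop
  have t3 : Tendsto (fun j : ℕ => (1 + 1 / ((j:ℝ) + 1)) ^ k) atTop (𝓝 ((1 + 0) ^ k)) :=
    (tendsto_const_nhds.add tendsto_one_div_add_atTop_nhds_zero_nat).pow k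
  simpa using (t2.const_mul lam).mul t3

theorem cmp_law (ν lam : ℝ) (hν : 0 < ν) (hl : 1 ≤ lam) :
    CmpLaw ν (lam ^ (-(1 / (2 * ν)))) (fun j => lam ^ j / (j.factorial : ℝ) ^ ν / cmpZ lam ν) := by
  have hl0 : 0 < lam := by linarith
  have hs : Summable fun j : ℕ => lam ^ j / (j.factorial : ℝ) ^ ν := by
    simpa using cmp_summable ν lam hν hl0 0
  have hZ : 0 < cmpZ lam ν := hs.tsum_pos (fun j => by positivity) 0 (by simp)
  refine ⟨by positivity, Real.rpow_le_one_of_one_le_of_nonpos hl ?_, fun j => by positivity,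
    ?_, fun k => ?_, fun j => ?_⟩
  · rw [neg_nonpos]; positivity
  · have := hs.hasSum.div_const (cmpZ lam ν)
    rwa [← cmpZ, div_self hZ.ne'] at this
  · refine ((cmp_summable ν lam hν hl0 k).div_const (cmpZ lam ν)).congr fun j => ?_
    ring
  · have e1 : ((lam ^ (-(1 / (2 * ν)))) ^ 2) ^ ν = lam⁻¹ := by
      rw [← Real.rpow_natCast, ← Real.rpow_mul hl0.le, ← Real.rpow_mul hl0.le, ← Real.rpow_neg_one]
      congr 1
      field_simp
      norm_num
    rw [Real.mul_rpow (by positivity) (by positivity), e1, Nat.factorial_succ]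
    push_cast
    rw [Real.mul_rpow (by positivity) (by positivity)]
    have : (0:ℝ) < (j.factorial : ℝ) ^ ν := by positivity
    have : (0:ℝ) < ((j:ℝ) + 1) ^ ν := by positivity
    field_simp
    ring

theorem cmp_var_eq (ν lam h : ℝ) (p : ℕ → ℝ) (L : CmpLaw ν h p)
    (hp : p = fun j => lam ^ j / (j.factorial : ℝ) ^ ν / cmpZ lam ν) :
    h ^ 2 * cmpVar lam ν = cmpn h p 2 - cmpn h p 1 ^ 2 := by
  have h0 := L.hpos
  have s0 := L.hasSum
  have s1 := L.hasSum_n 1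
  have s2 := L.hasSum_n 2
  have E1 : HasSum (fun j => p j * (j:ℝ)) (h⁻¹ * cmpn h p 1 + h⁻¹ ^ 2) := by
    have := (s1.mul_left h⁻¹).add (s0.mul_left (h⁻¹ ^ 2))
    rw [mul_one] at this
    have e : (fun j => h⁻¹ * (p j * cmpu h j ^ 1) + h⁻¹ ^ 2 * p j) = fun j => p j * (j:ℝ) := by
      funext j
      unfold cmpu
      field_simp
      ring
    rwa [e] at this
  have E2 : HasSum (fun j => p j * (j:ℝ) ^ 2)
      (h⁻¹ ^ 2 * cmpn h p 2 + 2 * h⁻¹ ^ 3 * cmpn h p 1 + h⁻¹ ^ 4) := by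
    have := ((s2.mul_left (h⁻¹ ^ 2)).add (s1.mul_left (2 * h⁻¹ ^ 3))).add (s0.mul_left (h⁻¹ ^ 4))
    rw [mul_one] at this
    have e : (fun j => h⁻¹ ^ 2 * (p j * cmpu h j ^ 2) + 2 * h⁻¹ ^ 3 * (p j * cmpu h j ^ 1) +
        h⁻¹ ^ 4 * p j) = fun j => p j * (j:ℝ) ^ 2 := by
      funext j
      unfold cmpu
      field_simp
      ring
    rwa [e] at this
  have F1 : (∑' j : ℕ, (j : ℝ) * lam ^ j / (j.factorial : ℝ) ^ ν) / cmpZ lam ν =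
      h⁻¹ * cmpn h p 1 + h⁻¹ ^ 2 := by
    rw [← E1.tsum_eq, ← tsum_div_const, hp]
    exact tsum_congr fun j => by ring
  have F2 : (∑' j : ℕ, (j : ℝ) ^ 2 * lam ^ j / (j.factorial : ℝ) ^ ν) / cmpZ lam ν =
      h⁻¹ ^ 2 * cmpn h p 2 + 2 * h⁻¹ ^ 3 * cmpn h p 1 + h⁻¹ ^ 4 := by
    rw [← E2.tsum_eq, ← tsum_div_const, hp]
    exact tsum_congr fun j => by ring
  rw [cmpVar, F1, F2]
  field_simp
  ring

/-- Asymptotics of the variance of the `CMP(λ,ν)` distribution: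
`Var X = (λ^{1/ν}/ν)(1 + ((ν²−1)/(24ν²)) λ^{−2/ν} + ((ν²−1)/(12ν³)) λ^{−3/ν}
  + O(λ^{−4/ν}))` as `λ → ∞`. -/
theorem cmpVar_asymptotic (ν : ℝ) (hν : 0 < ν) :
    ∃ C > (0 : ℝ), ∃ Λ > (0 : ℝ), ∀ lam : ℝ, lam ≥ Λ →
      |ν * lam ^ (-(1 / ν)) * cmpVar lam ν - 1 -
          ((ν ^ 2 - 1) / (24 * ν ^ 2)) * lam ^ (-(2 / ν)) -
          ((ν ^ 2 - 1) / (12 * ν ^ 3)) * lam ^ (-(3 / ν))|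
        ≤ C * lam ^ (-(4 / ν)) := by
  obtain ⟨C, hC, hb⟩ := cmp_main ν hν
  refine ⟨C + 1, by positivity, 1, one_pos, fun lam hl => ?_⟩
  have hl0 : 0 < lam := by linarith
  have L := cmp_law ν lam hν hl
  have key := hb _ _ L
  have hv := cmp_var_eq ν lam _ _ L rfl
  rw [← hv] at key
  set h := lam ^ (-(1 / (2 * ν))) with hh
  have hpow : ∀ m : ℕ, lam ^ (-((m:ℝ) / ν)) = h ^ (2 * m) := by
    intro m
    rw [hh, ← Real.rpow_natCast, ← Real.rpow_mul hl0.le]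
    congr 1
    push_cast
    field_simp
  have p1 := hpow 1
  have p2 := hpow 2
  have p3 := hpow 3
  have p4 := hpow 4
  norm_num at p1 p2 p3 p4
  rw [show (1:ℝ) / ν = ν⁻¹ by rw [one_div], p1, p2, p3, p4, mul_assoc]
  refine key.trans ?_
  have : 0 ≤ h ^ 8 := by positivity
  linarith
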